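/- arXiv:1010.3010 — 3 statements merged into one kernel-verified Lean document; each statement's English description precedes it below -/
import Mathlib

section
/- Let ψ : ℝ³ → ℝ be a smooth solution of the vorticity equation ζ_t + ψ_x ζ_y − ψ_y ζ_x = 0, where ζ := ψ_xx + ψ_yy. Then for every ε ∈ ℝ the function ψ̃(t,x,y) := ψ(t, x cos(εt) + y sin(εt), −x sin(εt) + y cos(εt)) + (ε/2)(x² + y²) is also a smooth solution of the vorticity equation. -/
/-!
Write `R` for the rotation of the `(x, y)`-plane through the angle `θ(t)` and
`Q = θ'(t) (x² + y²) / 2` for the stream function of the rigid rotation with angular velocity `θ'`.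
The chain rule gives `∂ₜ(f ∘ R) = (∂ₜ f) ∘ R - {Q, f ∘ R}`, so adding `Q` to the stream function
`ψ ∘ R` cancels exactly the term created by the moving frame: `∂ₜ + {ψ ∘ R + Q, ·}` applied to
`f ∘ R` is `(∂ₜ f + {ψ, f}) ∘ R`. As the Laplacian commutes with rotations, the new vorticity is
`ζ ∘ R + 2 θ'`, and the equation acquires only the forcing `2 θ''`, which vanishes for `θ = ε t`.
-/

noncomputable section

/-- Partial derivative with respect to t. -/
def dT (f : ℝ × ℝ × ℝ → ℝ) (p : ℝ × ℝ × ℝ) : ℝ := fderiv ℝ f p (1, 0, 0)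
/-- Partial derivative with respect to x. -/
def dX (f : ℝ × ℝ × ℝ → ℝ) (p : ℝ × ℝ × ℝ) : ℝ := fderiv ℝ f p (0, 1, 0)
/-- Partial derivative with respect to y. -/
def dY (f : ℝ × ℝ × ℝ → ℝ) (p : ℝ × ℝ × ℝ) : ℝ := fderiv ℝ f p (0, 0, 1)

/-- The vorticity ζ := ψ_xx + ψ_yy. -/
def vort (ψ : ℝ × ℝ × ℝ → ℝ) : ℝ × ℝ × ℝ → ℝ := fun p => dX (dX ψ) p + dY (dY ψ) p

/-- ψ is a smooth solution of the vorticity equation ζ_t + ψ_x ζ_y − ψ_y ζ_x = 0. -/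
def IsVortSol (ψ : ℝ × ℝ × ℝ → ℝ) : Prop :=
  ContDiff ℝ (⊤ : ℕ∞) ψ ∧ ∀ p : ℝ × ℝ × ℝ,
    dT (vort ψ) p + dX ψ p * dY (vort ψ) p - dY ψ p * dX (vort ψ) p = 0

/-- The Poisson bracket `{f, g} = f_x g_y - f_y g_x`. -/
def poissonBracket (f g : ℝ × ℝ × ℝ → ℝ) (p : ℝ × ℝ × ℝ) : ℝ :=
  dX f p * dY g p - dY f p * dX g p

/-- The derivative `f_t + {ψ, f}` of `f` along the flow with stream function `ψ`; the vorticity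
equation says that it vanishes for `f = ζ`. -/
def materialDeriv (ψ f : ℝ × ℝ × ℝ → ℝ) (p : ℝ × ℝ × ℝ) : ℝ :=
  dT f p + poissonBracket ψ f p

/-- The change to coordinates of the `(x, y)`-plane turned through the angle `θ t` at time `t`. -/
def planeRotation (θ : ℝ → ℝ) (p : ℝ × ℝ × ℝ) : ℝ × ℝ × ℝ :=
  (p.1, p.2.1 * Real.cos (θ p.1) + p.2.2 * Real.sin (θ p.1),
    -p.2.1 * Real.sin (θ p.1) + p.2.2 * Real.cos (θ p.1))

/-- The stream function of the rigid rotation of the plane with angular velocity `ω t`. -/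
def rigidStream (ω : ℝ → ℝ) (p : ℝ × ℝ × ℝ) : ℝ :=
  ω p.1 / 2 * (p.2.1 ^ 2 + p.2.2 ^ 2)

/-- The stream function `ψ` carried to the frame rotating with angle `θ`: for `θ t = ε * t`, the
action on `ψ` of the one-parameter group generated by `J^t`. -/
def rotatingFrame (θ : ℝ → ℝ) (ψ : ℝ × ℝ × ℝ → ℝ) (p : ℝ × ℝ × ℝ) : ℝ :=
  ψ (planeRotation θ p) + rigidStream (deriv θ) p

lemma isVortSol_iff_materialDeriv {ψ : ℝ × ℝ × ℝ → ℝ} :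
    IsVortSol ψ ↔ ContDiff ℝ (⊤ : ℕ∞) ψ ∧ ∀ p, materialDeriv ψ (vort ψ) p = 0 := by
  simp only [IsVortSol, materialDeriv, poissonBracket, add_sub_assoc]

section PartialDerivatives

variable {f g : ℝ × ℝ × ℝ → ℝ} {a b : ℝ → ℝ} {p : ℝ × ℝ × ℝ} {m n : WithTop ℕ∞}

lemma fderiv_apply_eq_partials (f : ℝ × ℝ × ℝ → ℝ) (p v : ℝ × ℝ × ℝ) :
    fderiv ℝ f p v = v.1 * dT f p + v.2.1 * dX f p + v.2.2 * dY f p := by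
  have hv : v = v.1 • ((1, 0, 0) : ℝ × ℝ × ℝ) + v.2.1 • ((0, 1, 0) : ℝ × ℝ × ℝ)
      + v.2.2 • ((0, 0, 1) : ℝ × ℝ × ℝ) := by simp
  conv_lhs => rw [hv]
  simp only [map_add, map_smul, smul_eq_mul, dT, dX, dY]

lemma deriv_comp_eq_partials {γ : ℝ → ℝ × ℝ × ℝ} {v : ℝ × ℝ × ℝ} {s : ℝ}
    (hf : DifferentiableAt ℝ f (γ s)) (hγ : HasDerivAt γ v s) :
    deriv (fun r => f (γ r)) s =
      v.1 * dT f (γ s) + v.2.1 * dX f (γ s) + v.2.2 * dY f (γ s) :=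
  (hf.hasFDerivAt.comp_hasDerivAt s hγ).deriv.trans (fderiv_apply_eq_partials f (γ s) v)

lemma dT_eq_deriv (hf : DifferentiableAt ℝ f p) :
    dT f p = deriv (fun t => f (t, p.2)) p.1 := by
  have hline : HasDerivAt (fun t : ℝ => (t, p.2)) (1, 0, 0) p.1 :=
    (hasDerivAt_id _).prodMk (hasDerivAt_const _ _)
  exact (hf.hasFDerivAt.comp_hasDerivAt p.1 hline).deriv.symm

lemma dX_eq_deriv (hf : DifferentiableAt ℝ f p) :
    dX f p = deriv (fun x => f (p.1, x, p.2.2)) p.2.1 := by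
  have hline : HasDerivAt (fun x : ℝ => (p.1, x, p.2.2)) (0, 1, 0) p.2.1 :=
    (hasDerivAt_const _ _).prodMk ((hasDerivAt_id _).prodMk (hasDerivAt_const _ _))
  exact (hf.hasFDerivAt.comp_hasDerivAt p.2.1 hline).deriv.symm

lemma dY_eq_deriv (hf : DifferentiableAt ℝ f p) :
    dY f p = deriv (fun y => f (p.1, p.2.1, y)) p.2.2 := by
  have hline : HasDerivAt (fun y : ℝ => (p.1, p.2.1, y)) (0, 0, 1) p.2.2 :=
    (hasDerivAt_const _ _).prodMk ((hasDerivAt_const _ _).prodMk (hasDerivAt_id _))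
  exact (hf.hasFDerivAt.comp_hasDerivAt p.2.2 hline).deriv.symm

lemma dT_fun_add (hf : DifferentiableAt ℝ f p) (hg : DifferentiableAt ℝ g p) :
    dT (fun q => f q + g q) p = dT f p + dT g p := by
  simp only [dT, fderiv_fun_add hf hg, add_apply]

lemma dX_fun_add (hf : DifferentiableAt ℝ f p) (hg : DifferentiableAt ℝ g p) :
    dX (fun q => f q + g q) p = dX f p + dX g p := by
  simp only [dX, fderiv_fun_add hf hg, add_apply]

lemma dY_fun_add (hf : DifferentiableAt ℝ f p) (hg : DifferentiableAt ℝ g p) :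
    dY (fun q => f q + g q) p = dY f p + dY g p := by
  simp only [dY, fderiv_fun_add hf hg, add_apply]

lemma dT_comp_time (ha : DifferentiableAt ℝ a p.1) : dT (fun q => a q.1) p = deriv a p.1 :=
  dT_eq_deriv (by fun_prop)

lemma dX_comp_time (ha : DifferentiableAt ℝ a p.1) : dX (fun q => a q.1) p = 0 :=
  (dX_eq_deriv (by fun_prop)).trans (deriv_const _ (a p.1))

lemma dY_comp_time (ha : DifferentiableAt ℝ a p.1) : dY (fun q => a q.1) p = 0 :=
  (dY_eq_deriv (by fun_prop)).trans (deriv_const _ (a p.1))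

lemma dX_time_linear_combination (ha : DifferentiableAt ℝ a p.1) (hb : DifferentiableAt ℝ b p.1)
    (hf : DifferentiableAt ℝ f p) (hg : DifferentiableAt ℝ g p) :
    dX (fun q => a q.1 * f q + b q.1 * g q) p = a p.1 * dX f p + b p.1 * dX g p := by
  have hmul {c : ℝ → ℝ} {k : ℝ × ℝ × ℝ → ℝ} (hc : DifferentiableAt ℝ c p.1)
      (hk : DifferentiableAt ℝ k p) : dX (fun q => c q.1 * k q) p = c p.1 * dX k p := by
    rw [dX_eq_deriv (by fun_prop), dX_eq_deriv hk]
    exact deriv_const_mul_field (c p.1)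
  rw [dX_fun_add (by fun_prop) (by fun_prop), hmul ha hf, hmul hb hg]

lemma dY_time_linear_combination (ha : DifferentiableAt ℝ a p.1) (hb : DifferentiableAt ℝ b p.1)
    (hf : DifferentiableAt ℝ f p) (hg : DifferentiableAt ℝ g p) :
    dY (fun q => a q.1 * f q + b q.1 * g q) p = a p.1 * dY f p + b p.1 * dY g p := by
  have hmul {c : ℝ → ℝ} {k : ℝ × ℝ × ℝ → ℝ} (hc : DifferentiableAt ℝ c p.1)
      (hk : DifferentiableAt ℝ k p) : dY (fun q => c q.1 * k q) p = c p.1 * dY k p := by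
    rw [dY_eq_deriv (by fun_prop), dY_eq_deriv hk]
    exact deriv_const_mul_field (c p.1)
  rw [dY_fun_add (by fun_prop) (by fun_prop), hmul ha hf, hmul hb hg]

lemma contDiff_dX (hf : ContDiff ℝ n f) (hmn : m + 1 ≤ n) : ContDiff ℝ m (dX f) :=
  (hf.fderiv_right hmn).clm_apply contDiff_const

lemma contDiff_dY (hf : ContDiff ℝ n f) (hmn : m + 1 ≤ n) : ContDiff ℝ m (dY f) :=
  (hf.fderiv_right hmn).clm_apply contDiff_const

lemma differentiable_dX (hf : ContDiff ℝ 2 f) : Differentiable ℝ (dX f) :=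
  (contDiff_dX hf one_add_one_eq_two.le).differentiable one_ne_zero

lemma differentiable_dY (hf : ContDiff ℝ 2 f) : Differentiable ℝ (dY f) :=
  (contDiff_dY hf one_add_one_eq_two.le).differentiable one_ne_zero

lemma differentiable_vort (hf : ContDiff ℝ 3 f) : Differentiable ℝ (vort f) :=
  (differentiable_dX (contDiff_dX hf two_add_one_eq_three.le)).fun_add
    (differentiable_dY (contDiff_dY hf two_add_one_eq_three.le))

lemma vort_fun_add (hf : ContDiff ℝ 2 f) (hg : ContDiff ℝ 2 g) (p : ℝ × ℝ × ℝ) :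
    vort (fun q => f q + g q) p = vort f p + vort g p := by
  have hx : dX (fun q => f q + g q) = fun q => dX f q + dX g q := funext fun q =>
    dX_fun_add (hf.differentiable two_ne_zero q) (hg.differentiable two_ne_zero q)
  have hy : dY (fun q => f q + g q) = fun q => dY f q + dY g q := funext fun q =>
    dY_fun_add (hf.differentiable two_ne_zero q) (hg.differentiable two_ne_zero q)
  simp only [vort, hx, hy, dX_fun_add (differentiable_dX hf p) (differentiable_dX hg p),
    dY_fun_add (differentiable_dY hf p) (differentiable_dY hg p)]
  ring

end PartialDerivatives

section MaterialDerivative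

variable {ψ φ f : ℝ × ℝ × ℝ → ℝ} {a : ℝ → ℝ} {p : ℝ × ℝ × ℝ}

lemma poissonBracket_fun_add_left (hψ : DifferentiableAt ℝ ψ p) (hφ : DifferentiableAt ℝ φ p) :
    poissonBracket (fun q => ψ q + φ q) f p = poissonBracket ψ f p + poissonBracket φ f p := by
  simp only [poissonBracket, dX_fun_add hψ hφ, dY_fun_add hψ hφ]
  ring

lemma materialDeriv_fun_add_time (hf : DifferentiableAt ℝ f p) (ha : DifferentiableAt ℝ a p.1) :
    materialDeriv ψ (fun q => f q + a q.1) p = materialDeriv ψ f p + deriv a p.1 := by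
  have haq : DifferentiableAt ℝ (fun q : ℝ × ℝ × ℝ => a q.1) p := by fun_prop
  simp only [materialDeriv, poissonBracket, dT_fun_add hf haq, dX_fun_add hf haq,
    dY_fun_add hf haq, dT_comp_time ha, dX_comp_time ha, dY_comp_time ha]
  ring

end MaterialDerivative

section RigidStream

variable {ω : ℝ → ℝ} {p : ℝ × ℝ × ℝ} {n : WithTop ℕ∞}

lemma contDiff_rigidStream (hω : ContDiff ℝ n ω) : ContDiff ℝ n (rigidStream ω) := by
  unfold rigidStream
  fun_prop

lemma differentiableAt_rigidStream (hω : DifferentiableAt ℝ ω p.1) :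
    DifferentiableAt ℝ (rigidStream ω) p := by
  unfold rigidStream
  fun_prop

lemma dX_rigidStream (hω : DifferentiableAt ℝ ω p.1) :
    dX (rigidStream ω) p = ω p.1 * p.2.1 := by
  have hline : HasDerivAt (fun x => rigidStream ω (p.1, x, p.2.2)) (ω p.1 * p.2.1) p.2.1 := by
    refine (((hasDerivAt_pow 2 p.2.1).add_const (p.2.2 ^ 2)).const_mul (ω p.1 / 2)).congr_deriv ?_
    ring
  rw [dX_eq_deriv (differentiableAt_rigidStream hω), hline.deriv]

lemma dY_rigidStream (hω : DifferentiableAt ℝ ω p.1) :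
    dY (rigidStream ω) p = ω p.1 * p.2.2 := by
  have hline : HasDerivAt (fun y => rigidStream ω (p.1, p.2.1, y)) (ω p.1 * p.2.2) p.2.2 := by
    refine (((hasDerivAt_pow 2 p.2.2).const_add (p.2.1 ^ 2)).const_mul (ω p.1 / 2)).congr_deriv ?_
    ring
  rw [dY_eq_deriv (differentiableAt_rigidStream hω), hline.deriv]

lemma vort_rigidStream (hω : Differentiable ℝ ω) (p : ℝ × ℝ × ℝ) :
    vort (rigidStream ω) p = 2 * ω p.1 := by
  have hx : dX (rigidStream ω) = fun q => ω q.1 * q.2.1 :=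
    funext fun q => dX_rigidStream (hω q.1)
  have hy : dY (rigidStream ω) = fun q => ω q.1 * q.2.2 :=
    funext fun q => dY_rigidStream (hω q.1)
  have hxx : dX (fun q => ω q.1 * q.2.1) p = ω p.1 := by
    rw [dX_eq_deriv (by fun_prop)]
    simp
  have hyy : dY (fun q => ω q.1 * q.2.2) p = ω p.1 := by
    rw [dY_eq_deriv (by fun_prop)]
    simp
  rw [vort, hx, hy, hxx, hyy, two_mul]

end RigidStream

section PlaneRotation

variable {θ : ℝ → ℝ} {f g : ℝ × ℝ × ℝ → ℝ} {p : ℝ × ℝ × ℝ} {n : WithTop ℕ∞}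

lemma contDiff_planeRotation (hθ : ContDiff ℝ n θ) : ContDiff ℝ n (planeRotation θ) := by
  unfold planeRotation
  fun_prop

lemma differentiableAt_planeRotation (hθ : DifferentiableAt ℝ θ p.1) :
    DifferentiableAt ℝ (planeRotation θ) p := by
  unfold planeRotation
  fun_prop

lemma dX_comp_planeRotation (hf : DifferentiableAt ℝ f (planeRotation θ p))
    (hθ : DifferentiableAt ℝ θ p.1) :
    dX (fun q => f (planeRotation θ q)) p =
      Real.cos (θ p.1) * dX f (planeRotation θ p)
        - Real.sin (θ p.1) * dY f (planeRotation θ p) := by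
  have hline : HasDerivAt (fun x => planeRotation θ (p.1, x, p.2.2))
      (0, Real.cos (θ p.1), -Real.sin (θ p.1)) p.2.1 := by
    refine (hasDerivAt_const _ _).prodMk (.prodMk ?_ ?_)
    · exact (hasDerivAt_mul_const (Real.cos (θ p.1))).add_const (p.2.2 * Real.sin (θ p.1))
    · exact (((hasDerivAt_neg p.2.1).mul_const (Real.sin (θ p.1))).add_const
        (p.2.2 * Real.cos (θ p.1))).congr_deriv (neg_one_mul _)
  rw [dX_eq_deriv (hf.fun_comp' p (differentiableAt_planeRotation hθ)),
    deriv_comp_eq_partials hf hline]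
  ring

lemma dY_comp_planeRotation (hf : DifferentiableAt ℝ f (planeRotation θ p))
    (hθ : DifferentiableAt ℝ θ p.1) :
    dY (fun q => f (planeRotation θ q)) p =
      Real.sin (θ p.1) * dX f (planeRotation θ p)
        + Real.cos (θ p.1) * dY f (planeRotation θ p) := by
  have hline : HasDerivAt (fun y => planeRotation θ (p.1, p.2.1, y))
      (0, Real.sin (θ p.1), Real.cos (θ p.1)) p.2.2 := by
    refine (hasDerivAt_const _ _).prodMk (.prodMk ?_ ?_)
    · exact (hasDerivAt_mul_const (Real.sin (θ p.1))).const_add (p.2.1 * Real.cos (θ p.1))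
    · exact (hasDerivAt_mul_const (Real.cos (θ p.1))).const_add (-p.2.1 * Real.sin (θ p.1))
  rw [dY_eq_deriv (hf.fun_comp' p (differentiableAt_planeRotation hθ)),
    deriv_comp_eq_partials hf hline]
  ring

lemma dT_comp_planeRotation (hf : DifferentiableAt ℝ f (planeRotation θ p))
    (hθ : DifferentiableAt ℝ θ p.1) :
    dT (fun q => f (planeRotation θ q)) p =
      dT f (planeRotation θ p)
        + deriv θ p.1 * ((planeRotation θ p).2.2 * dX f (planeRotation θ p)
          - (planeRotation θ p).2.1 * dY f (planeRotation θ p)) := by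
  have hline : HasDerivAt (fun t => planeRotation θ (t, p.2))
      (1, deriv θ p.1 * (planeRotation θ p).2.2, -(deriv θ p.1 * (planeRotation θ p).2.1))
      p.1 := by
    refine (hasDerivAt_id _).prodMk (.prodMk ?_ ?_)
    · refine ((hθ.hasDerivAt.cos.const_mul p.2.1).add
        (hθ.hasDerivAt.sin.const_mul p.2.2)).congr_deriv ?_
      simp only [planeRotation]
      ring
    · refine ((hθ.hasDerivAt.sin.const_mul (-p.2.1)).add
        (hθ.hasDerivAt.cos.const_mul p.2.2)).congr_deriv ?_
      simp only [planeRotation]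
      ring
  rw [dT_eq_deriv (hf.fun_comp' p (differentiableAt_planeRotation hθ)),
    deriv_comp_eq_partials hf hline]
  ring

lemma poissonBracket_comp_planeRotation (hf : DifferentiableAt ℝ f (planeRotation θ p))
    (hg : DifferentiableAt ℝ g (planeRotation θ p)) (hθ : DifferentiableAt ℝ θ p.1) :
    poissonBracket (fun q => f (planeRotation θ q)) (fun q => g (planeRotation θ q)) p =
      poissonBracket f g (planeRotation θ p) := by
  simp only [poissonBracket, dX_comp_planeRotation hf hθ, dX_comp_planeRotation hg hθ,
    dY_comp_planeRotation hf hθ, dY_comp_planeRotation hg hθ]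
  linear_combination (dX f (planeRotation θ p) * dY g (planeRotation θ p)
    - dY f (planeRotation θ p) * dX g (planeRotation θ p)) * Real.sin_sq_add_cos_sq (θ p.1)

lemma vort_comp_planeRotation (hf : ContDiff ℝ 2 f) (hθ : Differentiable ℝ θ)
    (p : ℝ × ℝ × ℝ) :
    vort (fun q => f (planeRotation θ q)) p = vort f (planeRotation θ p) := by
  have hR (q : ℝ × ℝ × ℝ) := differentiableAt_planeRotation (hθ q.1)
  have hf₁ := hf.differentiable two_ne_zero
  have hfx := differentiable_dX hf
  have hfy := differentiable_dY hf
  have hx : dX (fun q => f (planeRotation θ q)) = fun q =>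
      Real.cos (θ q.1) * dX f (planeRotation θ q)
        + -Real.sin (θ q.1) * dY f (planeRotation θ q) := by
    funext q
    rw [dX_comp_planeRotation (hf₁ _) (hθ _)]
    ring
  have hy : dY (fun q => f (planeRotation θ q)) = fun q =>
      Real.sin (θ q.1) * dX f (planeRotation θ q)
        + Real.cos (θ q.1) * dY f (planeRotation θ q) :=
    funext fun q => dY_comp_planeRotation (hf₁ _) (hθ _)
  have hxx : dX (dX fun q => f (planeRotation θ q)) p =
      Real.cos (θ p.1) * dX (fun q => dX f (planeRotation θ q)) p
        + -Real.sin (θ p.1) * dX (fun q => dY f (planeRotation θ q)) p := by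
    rw [hx]
    exact dX_time_linear_combination (hθ _).cos (hθ _).sin.fun_neg
      ((hfx _).fun_comp' p (hR p)) ((hfy _).fun_comp' p (hR p))
  have hyy : dY (dY fun q => f (planeRotation θ q)) p =
      Real.sin (θ p.1) * dY (fun q => dX f (planeRotation θ q)) p
        + Real.cos (θ p.1) * dY (fun q => dY f (planeRotation θ q)) p := by
    rw [hy]
    exact dY_time_linear_combination (hθ _).sin (hθ _).cos
      ((hfx _).fun_comp' p (hR p)) ((hfy _).fun_comp' p (hR p))
  simp only [vort, hxx, hyy, dX_comp_planeRotation (hfx _) (hθ _),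
    dX_comp_planeRotation (hfy _) (hθ _), dY_comp_planeRotation (hfx _) (hθ _),
    dY_comp_planeRotation (hfy _) (hθ _)]
  linear_combination (dX (dX f) (planeRotation θ p) + dY (dY f) (planeRotation θ p))
    * Real.sin_sq_add_cos_sq (θ p.1)

lemma dT_comp_planeRotation_add_poissonBracket (hf : DifferentiableAt ℝ f (planeRotation θ p))
    (hθ : DifferentiableAt ℝ θ p.1) (hθ' : DifferentiableAt ℝ (deriv θ) p.1) :
    dT (fun q => f (planeRotation θ q)) p
        + poissonBracket (rigidStream (deriv θ)) (fun q => f (planeRotation θ q)) p =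
      dT f (planeRotation θ p) := by
  simp only [poissonBracket, dT_comp_planeRotation hf hθ, dX_comp_planeRotation hf hθ,
    dY_comp_planeRotation hf hθ, dX_rigidStream hθ', dY_rigidStream hθ']
  simp only [planeRotation]
  ring

end PlaneRotation

section RotatingFrame

variable {ψ f : ℝ × ℝ × ℝ → ℝ} {θ : ℝ → ℝ} {p : ℝ × ℝ × ℝ}

lemma materialDeriv_rotatingFrame (hψ : DifferentiableAt ℝ ψ (planeRotation θ p))
    (hf : DifferentiableAt ℝ f (planeRotation θ p)) (hθ : DifferentiableAt ℝ θ p.1)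
    (hθ' : DifferentiableAt ℝ (deriv θ) p.1) :
    materialDeriv (rotatingFrame θ ψ) (fun q => f (planeRotation θ q)) p =
      materialDeriv ψ f (planeRotation θ p) := by
  have hψR := hψ.fun_comp' p (differentiableAt_planeRotation hθ)
  have hQ := differentiableAt_rigidStream hθ'
  have hbracket : poissonBracket (rotatingFrame θ ψ) (fun q => f (planeRotation θ q)) p =
      poissonBracket ψ f (planeRotation θ p)
        + poissonBracket (rigidStream (deriv θ)) (fun q => f (planeRotation θ q)) p :=
    (poissonBracket_fun_add_left hψR hQ).trans
      (congrArg (· + _) (poissonBracket_comp_planeRotation hψ hf hθ))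
  rw [materialDeriv, materialDeriv, hbracket,
    ← dT_comp_planeRotation_add_poissonBracket hf hθ hθ']
  ring

lemma vort_rotatingFrame (hψ : ContDiff ℝ 2 ψ) (hθ : ContDiff ℝ 3 θ) (p : ℝ × ℝ × ℝ) :
    vort (rotatingFrame θ ψ) p = vort ψ (planeRotation θ p) + 2 * deriv θ p.1 := by
  have hθ' : ContDiff ℝ 2 (deriv θ) := hθ.deriv'
  have hψR : ContDiff ℝ 2 fun q => ψ (planeRotation θ q) :=
    hψ.fun_comp (contDiff_planeRotation (hθ.of_le (by norm_num)))
  exact (vort_fun_add hψR (contDiff_rigidStream hθ') p).trans <| congrArg₂ (· + ·)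
    (vort_comp_planeRotation hψ (hθ.differentiable three_ne_zero) p)
    (vort_rigidStream (hθ'.differentiable two_ne_zero) p)

theorem materialDeriv_vort_rotatingFrame (hψ : ContDiff ℝ 3 ψ) (hθ : ContDiff ℝ 3 θ)
    (p : ℝ × ℝ × ℝ) :
    materialDeriv (rotatingFrame θ ψ) (vort (rotatingFrame θ ψ)) p =
      materialDeriv ψ (vort ψ) (planeRotation θ p) + 2 * deriv (deriv θ) p.1 := by
  have hθ₁ := hθ.differentiable three_ne_zero
  have hθ₂ : Differentiable ℝ (deriv θ) := hθ.deriv'.differentiable two_ne_zero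
  have hζ := differentiable_vort hψ
  rw [funext (vort_rotatingFrame (hψ.of_le (by norm_num)) hθ),
    materialDeriv_fun_add_time (a := fun t => 2 * deriv θ t)
      ((hζ _).fun_comp' p (differentiableAt_planeRotation (hθ₁ _))) ((hθ₂ _).const_mul 2),
    materialDeriv_rotatingFrame (hψ.differentiable three_ne_zero _) (hζ _) (hθ₁ _) (hθ₂ _),
    deriv_const_mul_field]

end RotatingFrame

theorem Jt_symmetry_of_vorticity_equation_general {ψ : ℝ × ℝ × ℝ → ℝ} (h : IsVortSol ψ)
    {θ : ℝ → ℝ} (hθ : ContDiff ℝ (⊤ : ℕ∞) θ) :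
    IsVortSol (rotatingFrame θ ψ) ↔ ∀ t, deriv (deriv θ) t = 0 := by
  obtain ⟨hψ, hζ⟩ := isVortSol_iff_materialDeriv.mp h
  have hsmooth : ContDiff ℝ (⊤ : ℕ∞) (rotatingFrame θ ψ) :=
    (hψ.comp (contDiff_planeRotation hθ)).add (contDiff_rigidStream hθ.deriv')
  have hforcing (p : ℝ × ℝ × ℝ) :
      materialDeriv (rotatingFrame θ ψ) (vort (rotatingFrame θ ψ)) p
        = 2 * deriv (deriv θ) p.1 := by
    rw [materialDeriv_vort_rotatingFrame (contDiff_infty.mp hψ 3) (contDiff_infty.mp hθ 3), hζ,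
      zero_add]
  simp only [isVortSol_iff_materialDeriv, hsmooth, hforcing, true_and, Prod.forall,
    mul_eq_zero, two_ne_zero, false_or, forall_const]

theorem Jt_symmetry_of_vorticity_equation
    (ψ : ℝ × ℝ × ℝ → ℝ) (h : IsVortSol ψ) (ε : ℝ) :
    IsVortSol (fun p =>
      ψ (p.1, p.2.1 * Real.cos (ε * p.1) + p.2.2 * Real.sin (ε * p.1),
         -p.2.1 * Real.sin (ε * p.1) + p.2.2 * Real.cos (ε * p.1))
      + ε / 2 * (p.2.1 ^ 2 + p.2.2 ^ 2)) := by
  have hε : deriv (fun t => ε * t) = fun _ => ε := by simp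
  have hsol : IsVortSol (rotatingFrame (fun t => ε * t) ψ) :=
    (Jt_symmetry_of_vorticity_equation_general h (by fun_prop)).mpr (by simp)
  unfold rotatingFrame rigidStream at hsol
  rwa [hε] at hsol
end
end

section
/- Let U ⊆ ℝ² be open and connected and let Z¹, Z² : U → ℝ be smooth functions such that at every point of U the gradients satisfy Z¹_x Z²_x + Z¹_y Z²_y = 0 and (Z¹_x)² + (Z¹_y)² = (Z²_x)² + (Z²_y)² ≠ 0. Then there exists ε ∈ {1, −1} such that Z¹_x = ε Z²_y and Z¹_y = −ε Z²_x hold at every point of U. -/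
noncomputable section

/-- Partial derivative with respect to the first variable. -/
def d1 (f : ℝ × ℝ → ℝ) (p : ℝ × ℝ) : ℝ := fderiv ℝ f p (1, 0)
/-- Partial derivative with respect to the second variable. -/
def d2 (f : ℝ × ℝ → ℝ) (p : ℝ × ℝ) : ℝ := fderiv ℝ f p (0, 1)

/-!
Orthogonality makes `(a, b)` a multiple of the rotated vector `(d, -c)`, with factor
`(a * d - b * c) / (c ^ 2 + d ^ 2)`. Equality of norms forces the square of this factor to be `1`,
and a continuous function with values `±1` is constant on a preconnected set.
-/

section Pointwise

variable {R : Type*} [CommRing R] {a b c d ε : R}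

lemma sq_cross_eq_sq_of_orthogonal (horth : a * c + b * d = 0)
    (hnorm : a ^ 2 + b ^ 2 = c ^ 2 + d ^ 2) : (a * d - b * c) ^ 2 = (c ^ 2 + d ^ 2) ^ 2 :=
  calc (a * d - b * c) ^ 2
      = (a ^ 2 + b ^ 2) * (c ^ 2 + d ^ 2) - (a * c + b * d) ^ 2 := by ring
    _ = (c ^ 2 + d ^ 2) ^ 2 := by rw [horth, hnorm]; ring

lemma eq_mul_and_eq_neg_mul_of_orthogonal_of_cross_eq [IsCancelMulZero R]
    (horth : a * c + b * d = 0) (hne : c ^ 2 + d ^ 2 ≠ 0)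
    (hcross : a * d - b * c = ε * (c ^ 2 + d ^ 2)) : a = ε * d ∧ b = -ε * c := by
  constructor
  · refine mul_right_cancel₀ hne ?_
    calc a * (c ^ 2 + d ^ 2)
        = (a * d - b * c) * d + c * (a * c + b * d) := by ring
      _ = ε * d * (c ^ 2 + d ^ 2) := by rw [horth, hcross]; ring
  · refine mul_right_cancel₀ hne ?_
    calc b * (c ^ 2 + d ^ 2)
        = -(a * d - b * c) * c + d * (a * c + b * d) := by ring
      _ = -ε * c * (c ^ 2 + d ^ 2) := by rw [horth, hcross]; ring

end Pointwise

lemma exists_sign_of_orthogonal_of_equinorm {X 𝕜 : Type*} [TopologicalSpace X]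
    [Field 𝕜] [TopologicalSpace 𝕜] [IsTopologicalDivisionRing 𝕜] [T1Space 𝕜]
    {S : Set X} (hS : IsPreconnected S) {a b c d : X → 𝕜}
    (ha : ContinuousOn a S) (hb : ContinuousOn b S) (hc : ContinuousOn c S) (hd : ContinuousOn d S)
    (horth : ∀ x ∈ S, a x * c x + b x * d x = 0)
    (hnorm : ∀ x ∈ S, a x ^ 2 + b x ^ 2 = c x ^ 2 + d x ^ 2)
    (hne : ∀ x ∈ S, c x ^ 2 + d x ^ 2 ≠ 0) :
    ∃ ε : 𝕜, (ε = 1 ∨ ε = -1) ∧ ∀ x ∈ S, a x = ε * d x ∧ b x = -ε * c x := by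
  have hcross : ContinuousOn (fun x ↦ a x * d x - b x * c x) S := (ha.mul hd).sub (hb.mul hc)
  have hsq : ContinuousOn (fun x ↦ c x ^ 2 + d x ^ 2) S := (hc.pow 2).add (hd.pow 2)
  rcases hS.eq_or_eq_neg_of_sq_eq hcross hsq
      (fun x hx ↦ sq_cross_eq_sq_of_orthogonal (horth x hx) (hnorm x hx)) (hne _) with hpos | hneg
  · exact ⟨1, .inl rfl, fun x hx ↦ eq_mul_and_eq_neg_mul_of_orthogonal_of_cross_eq
      (horth x hx) (hne x hx) ((hpos hx).trans (one_mul _).symm)⟩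
  · exact ⟨-1, .inr rfl, fun x hx ↦ eq_mul_and_eq_neg_mul_of_orthogonal_of_cross_eq
      (horth x hx) (hne x hx) ((hneg hx).trans (neg_one_mul _).symm)⟩

section PartialDerivatives

variable {U : Set (ℝ × ℝ)} {f : ℝ × ℝ → ℝ}

lemma continuousOn_d1 (hU : IsOpen U) (hf : ContDiffOn ℝ 1 f U) : ContinuousOn (d1 f) U :=
  (hf.continuousOn_fderiv_of_isOpen hU le_rfl).clm_apply continuousOn_const

lemma continuousOn_d2 (hU : IsOpen U) (hf : ContDiffOn ℝ 1 f U) : ContinuousOn (d2 f) U :=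
  (hf.continuousOn_fderiv_of_isOpen hU le_rfl).clm_apply continuousOn_const

end PartialDerivatives

theorem orthogonal_equinorm_gradients_give_Cauchy_Riemann_general
    {U : Set (ℝ × ℝ)} (hUopen : IsOpen U) (hUconn : IsPreconnected U)
    {Z1 Z2 : ℝ × ℝ → ℝ} (hZ1 : ContDiffOn ℝ 1 Z1 U) (hZ2 : ContDiffOn ℝ 1 Z2 U)
    (horth : ∀ p ∈ U, d1 Z1 p * d1 Z2 p + d2 Z1 p * d2 Z2 p = 0)
    (hnorm : ∀ p ∈ U, (d1 Z1 p) ^ 2 + (d2 Z1 p) ^ 2 = (d1 Z2 p) ^ 2 + (d2 Z2 p) ^ 2)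
    (hne : ∀ p ∈ U, (d1 Z1 p) ^ 2 + (d2 Z1 p) ^ 2 ≠ 0) :
    ∃ ε : ℝ, (ε = 1 ∨ ε = -1) ∧
      ∀ p ∈ U, d1 Z1 p = ε * d2 Z2 p ∧ d2 Z1 p = -ε * d1 Z2 p :=
  exists_sign_of_orthogonal_of_equinorm hUconn
    (continuousOn_d1 hUopen hZ1) (continuousOn_d2 hUopen hZ1)
    (continuousOn_d1 hUopen hZ2) (continuousOn_d2 hUopen hZ2)
    horth hnorm fun p hp ↦ hnorm p hp ▸ hne p hp

theorem orthogonal_equinorm_gradients_give_Cauchy_Riemann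
    (U : Set (ℝ × ℝ)) (hUopen : IsOpen U) (hUconn : IsConnected U)
    (Z1 Z2 : ℝ × ℝ → ℝ) (hZ1 : ContDiffOn ℝ (⊤ : ℕ∞) Z1 U) (hZ2 : ContDiffOn ℝ (⊤ : ℕ∞) Z2 U)
    (horth : ∀ p ∈ U, d1 Z1 p * d1 Z2 p + d2 Z1 p * d2 Z2 p = 0)
    (hnorm : ∀ p ∈ U, (d1 Z1 p) ^ 2 + (d2 Z1 p) ^ 2 = (d1 Z2 p) ^ 2 + (d2 Z2 p) ^ 2)
    (hne : ∀ p ∈ U, (d1 Z1 p) ^ 2 + (d2 Z1 p) ^ 2 ≠ 0) :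
    ∃ ε : ℝ, (ε = 1 ∨ ε = -1) ∧
      ∀ p ∈ U, d1 Z1 p = ε * d2 Z2 p ∧ d2 Z1 p = -ε * d1 Z2 p :=
  orthogonal_equinorm_gradients_give_Cauchy_Riemann_general hUopen hUconn.isPreconnected
    (hZ1.of_le (mod_cast le_top)) (hZ2.of_le (mod_cast le_top)) horth hnorm hne
end
end

section
/- Let f¹, f² : ℝ⁶ → ℝ be smooth functions of the variables (t, x, y, ζ, ζ₁, ζ₂) satisfying the system f¹_{ζζ₁} = 0, f²_{ζζ₂} = 0, f¹_{ζζ₂} + f²_{ζζ₁} = 0, and f¹_{ζx} + f²_{ζy} + f¹_{ζζ}·ζ₁ + f²_{ζζ}·ζ₂ = 0. Then there exist a smooth function Ψ = Ψ(t,x,y,ζ) and smooth functions f̃¹, f̃² = f̃^i(t,x,y,ζ₁,ζ₂) such that f¹ = Ψ_y + Ψ_ζ·ζ₂ + f̃¹ and f² = −Ψ_x − Ψ_ζ·ζ₁ + f̃². -/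
/-!
Statement 8: representation lemma for divergence expressions: smooth f¹, f² of
(t, x, y, ζ, ζ₁, ζ₂) satisfying the stated system can be written as
f¹ = Ψ_y + Ψ_ζ·ζ₂ + f̃¹, f² = −Ψ_x − Ψ_ζ·ζ₁ + f̃², with Ψ = Ψ(t,x,y,ζ) and
f̃^i = f̃^i(t,x,y,ζ₁,ζ₂).
-/

noncomputable section

abbrev V6 := ℝ × ℝ × ℝ × ℝ × ℝ × ℝ
abbrev V5 := ℝ × ℝ × ℝ × ℝ × ℝ
abbrev V4 := ℝ × ℝ × ℝ × ℝ

/-- Directional (partial) derivative on ℝ⁶. -/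
def pd6 (v : V6) (f : V6 → ℝ) (p : V6) : ℝ := fderiv ℝ f p v
/-- Directional (partial) derivative on ℝ⁴. -/
def pd4 (v : V4) (f : V4 → ℝ) (p : V4) : ℝ := fderiv ℝ f p v

open Set Topology
open scoped ContDiff

/-!
Everything happens after differentiating in `ζ`. The first three equations force `f¹_ζ` and `f²_ζ`
to be affine in the slopes with a common leading coefficient, `f¹_ζ = B + ζ₂ A` and
`f²_ζ = C - ζ₁ A`, where `A`, `B`, `C` depend on `(t, x, y, ζ)` only. The fourth equation is then a
polynomial in the slopes, and its coefficients say that `-C dx + B dy + A dζ` is closed on each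
slice `t = const`. A potential `Φ`, smooth also in `t`, gives `f¹_ζ = D_y Φ` and `f²_ζ = -D_x Φ`;
since total derivatives commute with `∂_ζ`, any `Ψ` with `Ψ_ζ = Φ` makes `f¹ - D_y Ψ` and
`f² + D_x Ψ` independent of `ζ`.
-/

universe u

section DirectionalDerivative

variable {E F : Type*} [NormedAddCommGroup E] [NormedSpace ℝ E]
  [NormedAddCommGroup F] [NormedSpace ℝ F]

/-- The derivative of `f` in the direction `v`, as a function of the base point so that it can be
iterated; `pd6` and `pd4` are the instances for real functions of six and four variables. -/
def dirDeriv (v : E) (f : E → F) (p : E) : F := fderiv ℝ f p v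

theorem contDiff_dirDeriv {f : E → F} (hf : ContDiff ℝ ∞ f) (v : E) :
    ContDiff ℝ ∞ (dirDeriv v f) :=
  (hf.fderiv_right (m := ∞) (by simp)).clm_apply contDiff_const

theorem differentiable_dirDeriv {f : E → F} (hf : ContDiff ℝ 2 f) (v : E) :
    Differentiable ℝ (dirDeriv v f) :=
  ((hf.fderiv_right (m := 1) (by norm_num)).clm_apply contDiff_const).differentiable (by simp)

theorem hasDerivAt_apply_add_smul {f : E → F} (hf : Differentiable ℝ f) (p v : E) (s : ℝ) :
    HasDerivAt (fun s : ℝ => f (p + s • v)) (dirDeriv v f (p + s • v)) s := by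
  have hline : HasDerivAt (fun s : ℝ => p + s • v) v s := by
    simpa using ((hasDerivAt_id s).smul_const v).const_add p
  exact (hf _).hasFDerivAt.comp_hasDerivAt s hline

theorem dirDeriv_eq_of_hasDerivAt {f : E → F} {p v : E} (hf : DifferentiableAt ℝ f p) {d : F}
    (h : HasDerivAt (fun s : ℝ => f (p + s • v)) d 0) : dirDeriv v f p = d :=
  (hf.hasFDerivAt.hasLineDerivAt v).unique h

theorem dirDeriv_clm_apply {G : Type*} [NormedAddCommGroup G] [NormedSpace ℝ G]
    {α : E → F →L[ℝ] G} {p : E} (hα : DifferentiableAt ℝ α p) (v : E) (w : F) :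
    dirDeriv v (fun q => α q w) p = dirDeriv v α p w := by
  simp [dirDeriv, fderiv_clm_apply hα (differentiableAt_const w)]

theorem dirDeriv_neg (v : E) (f : E → F) (p : E) :
    dirDeriv v (fun q => -f q) p = -dirDeriv v f p := by
  simp [dirDeriv, fderiv_fun_neg]

theorem dirDeriv_add {f g : E → F} {p : E} (hf : DifferentiableAt ℝ f p)
    (hg : DifferentiableAt ℝ g p) (v : E) :
    dirDeriv v (fun q => f q + g q) p = dirDeriv v f p + dirDeriv v g p := by
  simp [dirDeriv, fderiv_fun_add hf hg]

theorem dirDeriv_sub {f g : E → F} {p : E} (hf : DifferentiableAt ℝ f p)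
    (hg : DifferentiableAt ℝ g p) (v : E) :
    dirDeriv v (fun q => f q - g q) p = dirDeriv v f p - dirDeriv v g p := by
  simp [dirDeriv, fderiv_fun_sub hf hg]

theorem dirDeriv_smul (c : ℝ) (v : E) (f : E → F) (p : E) :
    dirDeriv (c • v) f p = c • dirDeriv v f p :=
  map_smul _ c v

theorem dirDeriv_comm {f : E → F} (hf : ContDiff ℝ 2 f) (v w p : E) :
    dirDeriv v (dirDeriv w f) p = dirDeriv w (dirDeriv v f) p := by
  have hdf : Differentiable ℝ (fderiv ℝ f) :=
    (hf.fderiv_right (m := 1) (by norm_num)).differentiable (by simp)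
  have hsymm : IsSymmSndFDerivAt ℝ f p := hf.contDiffAt.isSymmSndFDerivAt (by simp)
  calc dirDeriv v (dirDeriv w f) p
      = dirDeriv v (fderiv ℝ f) p w := dirDeriv_clm_apply (hdf p) v w
    _ = dirDeriv w (fderiv ℝ f) p v := hsymm v w
    _ = dirDeriv w (dirDeriv v f) p := (dirDeriv_clm_apply (hdf p) w v).symm

theorem apply_add_smul_of_dirDeriv_eq_zero {f : E → F} (hf : Differentiable ℝ f) {v : E}
    (h : ∀ p, dirDeriv v f p = 0) (p : E) (s : ℝ) : f (p + s • v) = f p := by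
  have hline := hasDerivAt_apply_add_smul hf p v
  simpa using is_const_of_deriv_eq_zero (fun s => (hline s).differentiableAt)
    (fun s => by rw [(hline s).deriv, h]) s 0

theorem apply_add_smul_of_dirDeriv_dirDeriv_eq_zero {f : E → F} (hf : Differentiable ℝ f)
    {v : E} (hf' : Differentiable ℝ (dirDeriv v f))
    (h : ∀ p, dirDeriv v (dirDeriv v f) p = 0) (p : E) (s : ℝ) :
    f (p + s • v) = f p + s • dirDeriv v f p := by
  have hslope (s : ℝ) : dirDeriv v f (p + s • v) = dirDeriv v f p :=
    apply_add_smul_of_dirDeriv_eq_zero hf' h p s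
  have hrest (s : ℝ) : HasDerivAt (fun s : ℝ => f (p + s • v) - s • dirDeriv v f p) 0 s := by
    simpa [hslope] using (hasDerivAt_apply_add_smul hf p v s).fun_sub
      ((hasDerivAt_id s).smul_const (dirDeriv v f p))
  have hconst := is_const_of_deriv_eq_zero (fun s => (hrest s).differentiableAt)
    (fun s => (hrest s).deriv) s 0
  simpa [sub_eq_iff_eq_add] using hconst

theorem apply_add_smul_add_smul_of_dirDeriv_skew {f g : E → F} (hf : ContDiff ℝ 2 f)
    (hg : ContDiff ℝ 2 g) {v w : E} (hfv : ∀ p, dirDeriv v f p = 0)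
    (hgw : ∀ p, dirDeriv w g p = 0) (hskew : ∀ p, dirDeriv w f p + dirDeriv v g p = 0)
    (p : E) (r s : ℝ) : f (p + r • v + s • w) = f p + s • dirDeriv w f p := by
  have hfw : dirDeriv w f = fun p => -dirDeriv v g p :=
    funext fun p => eq_neg_of_add_eq_zero_left (hskew p)
  have hfww (p : E) : dirDeriv w (dirDeriv w f) p = 0 := by
    rw [hfw, dirDeriv_neg, dirDeriv_comm hg, funext hgw]
    simp [dirDeriv]
  calc f (p + r • v + s • w) = f (p + s • w + r • v) := by rw [add_right_comm]
    _ = f (p + s • w) :=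
      apply_add_smul_of_dirDeriv_eq_zero (hf.differentiable (by simp)) hfv _ r
    _ = f p + s • dirDeriv w f p :=
      apply_add_smul_of_dirDeriv_dirDeriv_eq_zero (hf.differentiable (by simp))
        (differentiable_dirDeriv hf w) hfww p s

theorem dirDeriv_comp_add_smul_comp {E' : Type*} [NormedAddCommGroup E'] [NormedSpace ℝ E']
    {a b : E' → F} (ha : Differentiable ℝ a) (hb : Differentiable ℝ b) (L : E →L[ℝ] E')
    (l : E →L[ℝ] ℝ) {v : E} (hv : l v = 0) (p : E) :
    dirDeriv v (fun q => b (L q) + l q • a (L q)) p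
      = dirDeriv (L v) b (L p) + l p • dirDeriv (L v) a (L p) := by
  have haL := (ha (L p)).hasFDerivAt.comp p L.hasFDerivAt
  have hbL := (hb (L p)).hasFDerivAt.comp p L.hasFDerivAt
  have hsum := hbL.fun_add (l.hasFDerivAt.fun_smul haL)
  simpa [dirDeriv, hv] using DFunLike.congr_fun hsum.fderiv v

end DirectionalDerivative

section ParametricIntegral

theorem hasFDerivAt_parametric_intervalIntegral {E G : Type*} [NormedAddCommGroup E]
    [NormedSpace ℝ E] [NormedAddCommGroup G] [NormedSpace ℝ G] {f : E × ℝ → G}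
    (hf : ContDiff ℝ 1 f) (a b : ℝ) (p : E) :
    HasFDerivAt (fun q => ∫ s in a..b, f (q, s))
      (∫ s in a..b, (fderiv ℝ f (p, s)).comp (.inl ℝ E ℝ)) p := by
  have hfc : Continuous f := hf.continuous
  set f' : E × ℝ → E →L[ℝ] G := fun q => (fderiv ℝ f q).comp (.inl ℝ E ℝ)
  have hf' : Continuous f' := (hf.continuous_fderiv (by simp)).clm_comp continuous_const
  obtain ⟨M, hM⟩ := (isCompact_uIcc (a := a) (b := b)).exists_bound_of_continuousOn
    (f := fun s => f' (p, s)) (by fun_prop)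
  have hbound : ∀ᶠ q in 𝓝 p, ∀ s ∈ uIcc a b, ‖f' (q, s)‖ < M + 1 :=
    isCompact_uIcc.eventually_forall_of_forall_eventually fun s hs =>
      hf'.norm.continuousAt.eventually_lt_const ((hM s hs).trans_lt (lt_add_one M))
  refine intervalIntegral.hasFDerivAt_integral_of_dominated_of_fderiv_le
    (F' := fun q s => f' (q, s)) (bound := fun _ => M + 1) hbound ?_ ?_ ?_ ?_ ?_ ?_
  · exact .of_forall fun q =>
      (by fun_prop : Continuous fun s => f (q, s)).aestronglyMeasurable
  · exact (by fun_prop : Continuous fun s => f (p, s)).intervalIntegrable a b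
  · exact (by fun_prop : Continuous fun s => f' (p, s)).aestronglyMeasurable
  · exact .of_forall fun s hs q hq => (hq s (uIoc_subset_uIcc hs)).le
  · exact intervalIntegrable_const
  · exact .of_forall fun s _ q _ =>
      (hf.differentiable (by simp) (q, s)).hasFDerivAt.comp q (hasFDerivAt_prodMk_left q s)

theorem dirDeriv_parametric_intervalIntegral {E G : Type*} [NormedAddCommGroup E]
    [NormedSpace ℝ E] [NormedAddCommGroup G] [NormedSpace ℝ G] {f : E × ℝ → G}
    (hf : ContDiff ℝ 1 f) (a b : ℝ) (v p : E) :
    dirDeriv v (fun q => ∫ s in a..b, f (q, s)) p = ∫ s in a..b, dirDeriv (v, 0) f (p, s) := by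
  have hf' : Continuous fun s => (fderiv ℝ f (p, s)).comp (.inl ℝ E ℝ) :=
    ((hf.continuous_fderiv (by simp)).comp (by fun_prop)).clm_comp continuous_const
  rw [dirDeriv, (hasFDerivAt_parametric_intervalIntegral hf a b p).fderiv,
    ContinuousLinearMap.intervalIntegral_apply (hf'.intervalIntegrable a b)]
  rfl

-- `E` and `G` share a universe because the induction passes from `G` to `E →L[ℝ] G`.
theorem contDiff_nat_parametric_intervalIntegral {E G : Type u} [NormedAddCommGroup E]
    [NormedSpace ℝ E] [NormedAddCommGroup G] [NormedSpace ℝ G] (n : ℕ) {f : E × ℝ → G}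
    (hf : ContDiff ℝ n f) (a b : ℝ) : ContDiff ℝ n (fun q => ∫ s in a..b, f (q, s)) := by
  induction n generalizing G with
  | zero =>
    rw [Nat.cast_zero, contDiff_zero]
    exact intervalIntegral.continuous_parametric_intervalIntegral_of_continuous'
      (f := fun q s => f (q, s)) hf.continuous a b
  | succ n ih =>
    push_cast at hf ⊢
    rw [contDiff_succ_iff_hasFDerivAt]
    have hf' : ContDiff ℝ n fun q => (fderiv ℝ f q).comp (.inl ℝ E ℝ) :=
      (hf.fderiv_right le_rfl).clm_comp contDiff_const
    exact ⟨_, ih hf', hasFDerivAt_parametric_intervalIntegral (hf.of_le le_add_self) a b⟩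

theorem contDiff_parametric_intervalIntegral {E G : Type u} [NormedAddCommGroup E]
    [NormedSpace ℝ E] [NormedAddCommGroup G] [NormedSpace ℝ G] {n : ℕ∞} {f : E × ℝ → G}
    (hf : ContDiff ℝ n f) (a b : ℝ) : ContDiff ℝ n (fun q => ∫ s in a..b, f (q, s)) :=
  contDiff_iff_forall_nat_le.2 fun m hm =>
    contDiff_nat_parametric_intervalIntegral m (hf.of_le (mod_cast hm)) a b

end ParametricIntegral

section Poincare

variable {E G : Type u} {F : Type*} [NormedAddCommGroup E] [NormedSpace ℝ E]
  [NormedAddCommGroup F] [NormedSpace ℝ F] [NormedAddCommGroup G] [NormedSpace ℝ G]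

theorem integral_add_smul_dirDeriv [CompleteSpace G] {f : E → G} (hf : ContDiff ℝ 1 f)
    (p v : E) : ∫ s in (0 : ℝ)..1, (f (p + s • v) + s • dirDeriv v f (p + s • v)) = f (p + v) := by
  have hf' : Continuous (dirDeriv v f) :=
    (hf.continuous_fderiv (by simp)).clm_apply continuous_const
  have hfc := hf.continuous
  have hderiv (s : ℝ) : HasDerivAt (fun s : ℝ => s • f (p + s • v))
      (f (p + s • v) + s • dirDeriv v f (p + s • v)) s := by
    simpa [add_comm] using (hasDerivAt_id s).fun_smul
      (hasDerivAt_apply_add_smul (hf.differentiable (by simp)) p v s)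
  rw [intervalIntegral.integral_eq_sub_of_hasDerivAt (fun s _ => hderiv s)
    ((by fun_prop : Continuous _).intervalIntegrable 0 1)]
  simp

theorem exists_contDiff_dirDeriv_eq_of_closed [CompleteSpace G] (ι : F →L[ℝ] E) (r : E →L[ℝ] F)
    (hr : ∀ v, r (ι v) = v) {α : E → F →L[ℝ] G} (hα : ContDiff ℝ ∞ α)
    (hclosed : ∀ p v w, dirDeriv (ι v) α p w = dirDeriv (ι w) α p v) :
    ∃ Φ : E → G, ContDiff ℝ ∞ Φ ∧ ∀ p v, dirDeriv (ι v) Φ p = α p v := by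
  let f : E × ℝ → G := fun q => α (q.1 - ι (r q.1) + q.2 • ι (r q.1)) (r q.1)
  have hf : ContDiff ℝ ∞ f := by fun_prop
  refine ⟨fun q => ∫ s in (0 : ℝ)..1, f (q, s), contDiff_parametric_intervalIntegral hf 0 1,
    fun p v => ?_⟩
  have hαd : Differentiable ℝ α := hα.differentiable (by simp)
  set w := r p
  set o := p - ι w
  have hf' (s : ℝ) : dirDeriv (ι v, 0) f (p, s)
      = α (o + s • ι w) v + s • dirDeriv (ι w) (fun q => α q v) (o + s • ι w) := by
    have hpoint := hasDerivAt_apply_add_smul hαd (o + s • ι w) (s • ι v) 0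
    have hvector : HasDerivAt (fun τ : ℝ => w + τ • v) v 0 := by
      simpa using ((hasDerivAt_id (0 : ℝ)).smul_const v).const_add w
    have hline (τ : ℝ) : f ((p, s) + τ • (ι v, 0)) = α (o + s • ι w + τ • s • ι v) (w + τ • v) := by
      have hvector_eq : r (p + τ • ι v) = w + τ • v := by simp [w, hr]
      have hpoint_eq : p + τ • ι v - ι (w + τ • v) + s • ι (w + τ • v)
          = o + s • ι w + τ • s • ι v := by
        simp only [o, map_add, map_smul]
        module
      simp only [f, Prod.fst_add, Prod.snd_add, Prod.smul_mk, smul_zero, add_zero, hvector_eq,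
        hpoint_eq]
    refine dirDeriv_eq_of_hasDerivAt (hf.differentiable (by simp) _) ?_
    simp only [hline]
    simpa [dirDeriv_smul, hclosed _ v w, dirDeriv_clm_apply (hαd _), add_comm]
      using hpoint.clm_apply hvector
  rw [dirDeriv_parametric_intervalIntegral (hf.of_le (by simp)), funext hf',
    integral_add_smul_dirDeriv ((contDiff_infty.1 hα 1).clm_apply contDiff_const), sub_add_cancel]

theorem exists_contDiff_dirDeriv_eq [CompleteSpace G] {l : E →L[ℝ] ℝ} {v : E} (hv : l v = 1)
    {f : E → G} (hf : ContDiff ℝ ∞ f) :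
    ∃ Φ : E → G, ContDiff ℝ ∞ Φ ∧ ∀ p, dirDeriv v Φ p = f p := by
  let α : E → ℝ →L[ℝ] G := fun q => (ContinuousLinearMap.id ℝ ℝ).smulRight (f q)
  have hα : ContDiff ℝ ∞ α := contDiff_const.smulRight hf
  have hclosed (p : E) (a b : ℝ) : dirDeriv (a • v) α p b = dirDeriv (b • v) α p a := by
    have hderiv (c : ℝ) : dirDeriv v α p c = c • dirDeriv v α p 1 := by
      rw [← map_smul, smul_eq_mul, mul_one]
    simp only [dirDeriv_smul, smul_apply, hderiv a, hderiv b]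
    exact smul_comm a b _
  obtain ⟨Φ, hΦ, hΦv⟩ :=
    exists_contDiff_dirDeriv_eq_of_closed (.toSpanSingleton ℝ v) l (by simp [hv]) hα hclosed
  exact ⟨Φ, hΦ, fun p => by simpa [α] using hΦv p 1⟩

end Poincare

section Jets

variable {T G : Type u} [NormedAddCommGroup T] [NormedSpace ℝ T]
  [NormedAddCommGroup G] [NormedSpace ℝ G]

/-- The space of points `(t, x, y, ζ)`, with the parameter `t` in a normed space `T`. -/
abbrev ZeroJet (T : Type*) := T × ℝ × ℝ × ℝ

/-- The space of points `(t, x, y, ζ, ζ₁, ζ₂)`, where `ζ₁` and `ζ₂` stand for the derivatives of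
`ζ` in `x` and `y`. -/
abbrev OneJet (T : Type*) := T × ℝ × ℝ × ℝ × ℝ × ℝ

/-- The projection `(t, x, y, ζ, ζ₁, ζ₂) ↦ (t, x, y, ζ)`. -/
def OneJet.toZeroJet : OneJet T →L[ℝ] ZeroJet T where
  toFun p := (p.1, p.2.1, p.2.2.1, p.2.2.2.1)
  map_add' _ _ := rfl
  map_smul' _ _ := rfl
  cont := by fun_prop

/-- The coordinate `ζ₁` on the space of one-jets. -/
def OneJet.slopeX : OneJet T →L[ℝ] ℝ where
  toFun p := p.2.2.2.2.1
  map_add' _ _ := rfl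
  map_smul' _ _ := rfl
  cont := by fun_prop

/-- The coordinate `ζ₂` on the space of one-jets. -/
def OneJet.slopeY : OneJet T →L[ℝ] ℝ where
  toFun p := p.2.2.2.2.2
  map_add' _ _ := rfl
  map_smul' _ _ := rfl
  cont := by fun_prop

/-- The total derivative `Ψ_v + l • Ψ_ζ` of a function of `(t, x, y, ζ)`: with `v = ∂_x` and
`l = ζ₁` this is `D_x Ψ`, with `v = ∂_y` and `l = ζ₂` it is `D_y Ψ`. -/
def totalDeriv (v : ZeroJet T) (l : OneJet T →L[ℝ] ℝ) (Ψ : ZeroJet T → G) (p : OneJet T) : G :=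
  dirDeriv v Ψ p.toZeroJet + l p • dirDeriv (0, 0, 0, 1) Ψ p.toZeroJet

theorem OneJet.toZeroJet_apply (t : T) (x y ζ ζ₁ ζ₂ : ℝ) :
    OneJet.toZeroJet (t, x, y, ζ, ζ₁, ζ₂) = (t, x, y, ζ) :=
  rfl

theorem OneJet.slopeX_apply (p : OneJet T) : p.slopeX = p.2.2.2.2.1 :=
  rfl

theorem OneJet.slopeY_apply (p : OneJet T) : p.slopeY = p.2.2.2.2.2 :=
  rfl

theorem contDiff_totalDeriv (v : ZeroJet T) (l : OneJet T →L[ℝ] ℝ) {Ψ : ZeroJet T → G}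
    (hΨ : ContDiff ℝ ∞ Ψ) : ContDiff ℝ ∞ (totalDeriv v l Ψ) := by
  have hv := contDiff_dirDeriv hΨ v
  have hζ := contDiff_dirDeriv hΨ (0, 0, 0, 1)
  unfold totalDeriv
  fun_prop

theorem dirDeriv_zeta_totalDeriv (v : ZeroJet T) {l : OneJet T →L[ℝ] ℝ}
    (hl : l (0, 0, 0, 1, 0, 0) = 0) {Ψ : ZeroJet T → G} (hΨ : ContDiff ℝ 2 Ψ) (p : OneJet T) :
    dirDeriv (0, 0, 0, 1, 0, 0) (totalDeriv v l Ψ) p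
      = totalDeriv v l (dirDeriv (0, 0, 0, 1) Ψ) p := by
  calc dirDeriv (0, 0, 0, 1, 0, 0) (totalDeriv v l Ψ) p
      = dirDeriv (0, 0, 0, 1) (dirDeriv v Ψ) p.toZeroJet
        + l p • dirDeriv (0, 0, 0, 1) (dirDeriv (0, 0, 0, 1) Ψ) p.toZeroJet :=
        dirDeriv_comp_add_smul_comp (differentiable_dirDeriv hΨ _) (differentiable_dirDeriv hΨ v)
          OneJet.toZeroJet l hl p
    _ = totalDeriv v l (dirDeriv (0, 0, 0, 1) Ψ) p := by
        rw [dirDeriv_comm hΨ]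
        rfl

theorem exists_contDiff_forall_eq_of_dirDeriv_zeta_eq_zero {h : OneJet T → G}
    (hh : ContDiff ℝ ∞ h) (hζ : ∀ p, dirDeriv (0, 0, 0, 1, 0, 0) h p = 0) :
    ∃ g : T × ℝ × ℝ × ℝ × ℝ → G, ContDiff ℝ ∞ g ∧
      ∀ t x y ζ ζ₁ ζ₂, h (t, x, y, ζ, ζ₁, ζ₂) = g (t, x, y, ζ₁, ζ₂) := by
  refine ⟨fun r => h (r.1, r.2.1, r.2.2.1, 0, r.2.2.2.1, r.2.2.2.2), by fun_prop,
    fun t x y ζ ζ₁ ζ₂ => ?_⟩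
  simpa using apply_add_smul_of_dirDeriv_eq_zero (hh.differentiable (by simp)) hζ
    (t, x, y, 0, ζ₁, ζ₂) ζ

theorem dirDeriv_inr_eq_smul_add (f : ZeroJet T → G) (v : ℝ × ℝ × ℝ) (q : ZeroJet T) :
    dirDeriv (ContinuousLinearMap.inr ℝ T _ v) f q = v.1 • dirDeriv (0, 1, 0, 0) f q
      + v.2.1 • dirDeriv (0, 0, 1, 0) f q + v.2.2 • dirDeriv (0, 0, 0, 1) f q := by
  simp only [dirDeriv, ← map_smul, ← map_add]
  simp

theorem exists_contDiff_dirDeriv_eq_of_curl_eq_zero [CompleteSpace G] {P Q R : ZeroJet T → G}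
    (hP : ContDiff ℝ ∞ P) (hQ : ContDiff ℝ ∞ Q) (hR : ContDiff ℝ ∞ R)
    (hPQ : ∀ q, dirDeriv (0, 0, 1, 0) P q = dirDeriv (0, 1, 0, 0) Q q)
    (hQR : ∀ q, dirDeriv (0, 0, 0, 1) Q q = dirDeriv (0, 0, 1, 0) R q)
    (hPR : ∀ q, dirDeriv (0, 0, 0, 1) P q = dirDeriv (0, 1, 0, 0) R q) :
    ∃ Φ : ZeroJet T → G, ContDiff ℝ ∞ Φ ∧ dirDeriv (0, 1, 0, 0) Φ = P ∧
      dirDeriv (0, 0, 1, 0) Φ = Q ∧ dirDeriv (0, 0, 0, 1) Φ = R := by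
  let dx : ℝ × ℝ × ℝ →L[ℝ] ℝ := .fst ℝ ℝ (ℝ × ℝ)
  let dy : ℝ × ℝ × ℝ →L[ℝ] ℝ := (ContinuousLinearMap.fst ℝ ℝ ℝ).comp (.snd ℝ ℝ (ℝ × ℝ))
  let dζ : ℝ × ℝ × ℝ →L[ℝ] ℝ := (ContinuousLinearMap.snd ℝ ℝ ℝ).comp (.snd ℝ ℝ (ℝ × ℝ))
  let α : ZeroJet T → ℝ × ℝ × ℝ →L[ℝ] G := fun q =>
    dx.smulRight (P q) + dy.smulRight (Q q) + dζ.smulRight (R q)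
  have hα : ContDiff ℝ ∞ α :=
    ((contDiff_const.smulRight hP).add (contDiff_const.smulRight hQ)).add
      (contDiff_const.smulRight hR)
  have hαw (u q : ZeroJet T) (w : ℝ × ℝ × ℝ) : dirDeriv u α q w
      = w.1 • dirDeriv u P q + w.2.1 • dirDeriv u Q q + w.2.2 • dirDeriv u R q := by
    have hP' := hP.differentiable (by simp) q
    have hQ' := hQ.differentiable (by simp) q
    have hR' := hR.differentiable (by simp) q
    have hsum := ((hP'.hasFDerivAt.const_smul w.1).fun_add
      (hQ'.hasFDerivAt.const_smul w.2.1)).fun_add (hR'.hasFDerivAt.const_smul w.2.2)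
    rw [← dirDeriv_clm_apply (hα.differentiable (by simp) q)]
    exact DFunLike.congr_fun hsum.fderiv u
  have hclosed (q : ZeroJet T) (v w : ℝ × ℝ × ℝ) :
      dirDeriv (ContinuousLinearMap.inr ℝ T _ v) α q w
        = dirDeriv (ContinuousLinearMap.inr ℝ T _ w) α q v := by
    rw [hαw, hαw]
    simp only [dirDeriv_inr_eq_smul_add, hPQ, hQR, hPR]
    module
  obtain ⟨Φ, hΦ, hΦα⟩ := exists_contDiff_dirDeriv_eq_of_closed (.inr ℝ T (ℝ × ℝ × ℝ))
    (.snd ℝ T (ℝ × ℝ × ℝ)) (fun _ => rfl) hα hclosed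
  refine ⟨Φ, hΦ, funext fun q => ?_, funext fun q => ?_, funext fun q => ?_⟩
  · simpa [α, dx, dy, dζ] using hΦα q (1, 0, 0)
  · simpa [α, dx, dy, dζ] using hΦα q (0, 1, 0)
  · simpa [α, dx, dy, dζ] using hΦα q (0, 0, 1)

theorem exists_affine_coefficients_of_skew {F₁ F₂ : OneJet T → G} (hF₁ : ContDiff ℝ ∞ F₁)
    (hF₂ : ContDiff ℝ ∞ F₂) (h₁ : ∀ p, dirDeriv (0, 0, 0, 0, 1, 0) F₁ p = 0)
    (h₂ : ∀ p, dirDeriv (0, 0, 0, 0, 0, 1) F₂ p = 0)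
    (h₁₂ : ∀ p, dirDeriv (0, 0, 0, 0, 0, 1) F₁ p + dirDeriv (0, 0, 0, 0, 1, 0) F₂ p = 0) :
    ∃ A B C : ZeroJet T → G, ContDiff ℝ ∞ A ∧ ContDiff ℝ ∞ B ∧ ContDiff ℝ ∞ C ∧
      F₁ = (fun p => B p.toZeroJet + p.slopeY • A p.toZeroJet) ∧
      F₂ = (fun p => C p.toZeroJet + p.slopeX • -A p.toZeroJet) := by
  let e₁ : OneJet T := (0, 0, 0, 0, 1, 0)
  let e₂ : OneJet T := (0, 0, 0, 0, 0, 1)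
  let j : ZeroJet T → OneJet T := fun q => (q.1, q.2.1, q.2.2.1, q.2.2.2, 0, 0)
  have hj : ContDiff ℝ ∞ j := by fun_prop
  have hp (p : OneJet T) : p = j p.toZeroJet + p.slopeX • e₁ + p.slopeY • e₂ := by
    simp [j, e₁, e₂, OneJet.toZeroJet, OneJet.slopeX, OneJet.slopeY]
  have hF₁' := contDiff_infty.1 hF₁ 2
  have hF₂' := contDiff_infty.1 hF₂ 2
  refine ⟨fun q => dirDeriv e₂ F₁ (j q), fun q => F₁ (j q), fun q => F₂ (j q),
    (contDiff_dirDeriv hF₁ _).comp hj, hF₁.comp hj, hF₂.comp hj, funext fun p => ?_,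
    funext fun p => ?_⟩
  · calc F₁ p = F₁ (j p.toZeroJet + p.slopeX • e₁ + p.slopeY • e₂) := by rw [← hp]
      _ = F₁ (j p.toZeroJet) + p.slopeY • dirDeriv e₂ F₁ (j p.toZeroJet) :=
        apply_add_smul_add_smul_of_dirDeriv_skew hF₁' hF₂' h₁ h₂ h₁₂ _ _ _
  · have h₂₁ (p : OneJet T) : dirDeriv e₁ F₂ p + dirDeriv e₂ F₁ p = 0 :=
      (add_comm _ _).trans (h₁₂ p)
    calc F₂ p = F₂ (j p.toZeroJet + p.slopeY • e₂ + p.slopeX • e₁) := by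
          rw [add_right_comm, ← hp]
      _ = F₂ (j p.toZeroJet) + p.slopeX • dirDeriv e₁ F₂ (j p.toZeroJet) :=
        apply_add_smul_add_smul_of_dirDeriv_skew hF₂' hF₁' h₂ h₁ h₂₁ _ _ _
      _ = F₂ (j p.toZeroJet) + p.slopeX • -dirDeriv e₂ F₁ (j p.toZeroJet) := by
        rw [eq_neg_of_add_eq_zero_left (h₂₁ _)]

theorem affine_coefficients_closed {A B C : ZeroJet T → G} (hA : Differentiable ℝ A)
    (hB : Differentiable ℝ B) (hC : Differentiable ℝ C) {F₁ F₂ : OneJet T → G}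
    (hF₁ : F₁ = fun p => B p.toZeroJet + p.slopeY • A p.toZeroJet)
    (hF₂ : F₂ = fun p => C p.toZeroJet + p.slopeX • -A p.toZeroJet)
    (hdiv : ∀ p : OneJet T, dirDeriv (0, 1, 0, 0, 0, 0) F₁ p + dirDeriv (0, 0, 1, 0, 0, 0) F₂ p
      + p.slopeX • dirDeriv (0, 0, 0, 1, 0, 0) F₁ p
      + p.slopeY • dirDeriv (0, 0, 0, 1, 0, 0) F₂ p = 0) (q : ZeroJet T) :
    dirDeriv (0, 0, 1, 0) C q = -dirDeriv (0, 1, 0, 0) B q ∧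
      dirDeriv (0, 0, 0, 1) B q = dirDeriv (0, 0, 1, 0) A q ∧
      dirDeriv (0, 0, 0, 1) C q = -dirDeriv (0, 1, 0, 0) A q := by
  have hF₁' {v : OneJet T} (hv : v.slopeY = 0) (p : OneJet T) :
      dirDeriv v F₁ p
        = dirDeriv v.toZeroJet B p.toZeroJet + p.slopeY • dirDeriv v.toZeroJet A p.toZeroJet := by
    rw [hF₁]
    exact dirDeriv_comp_add_smul_comp hA hB _ _ hv p
  have hF₂' {v : OneJet T} (hv : v.slopeX = 0) (p : OneJet T) :
      dirDeriv v F₂ p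
        = dirDeriv v.toZeroJet C p.toZeroJet + p.slopeX • -dirDeriv v.toZeroJet A p.toZeroJet := by
    rw [hF₂, ← dirDeriv_neg]
    exact dirDeriv_comp_add_smul_comp hA.neg hC _ _ hv p
  have hpoly (r s : ℝ) :
      (dirDeriv (0, 1, 0, 0) B q + s • dirDeriv (0, 1, 0, 0) A q)
        + (dirDeriv (0, 0, 1, 0) C q + r • -dirDeriv (0, 0, 1, 0) A q)
        + r • (dirDeriv (0, 0, 0, 1) B q + s • dirDeriv (0, 0, 0, 1) A q)
        + s • (dirDeriv (0, 0, 0, 1) C q + r • -dirDeriv (0, 0, 0, 1) A q) = 0 := by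
    have h := hdiv (q.1, q.2.1, q.2.2.1, q.2.2.2, r, s)
    rw [hF₁' rfl, hF₂' rfl, hF₁' rfl, hF₂' rfl] at h
    exact h
  refine ⟨?_, ?_, ?_⟩
  · linear_combination (norm := module) hpoly 0 0
  · linear_combination (norm := module) hpoly 1 0 - hpoly 0 0
  · linear_combination (norm := module) hpoly 0 1 - hpoly 0 0

theorem exists_totalDeriv_potential [CompleteSpace G] {F₁ F₂ : OneJet T → G}
    (hF₁ : ContDiff ℝ ∞ F₁) (hF₂ : ContDiff ℝ ∞ F₂)
    (h₁ : ∀ p, dirDeriv (0, 0, 0, 0, 1, 0) F₁ p = 0)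
    (h₂ : ∀ p, dirDeriv (0, 0, 0, 0, 0, 1) F₂ p = 0)
    (h₁₂ : ∀ p, dirDeriv (0, 0, 0, 0, 0, 1) F₁ p + dirDeriv (0, 0, 0, 0, 1, 0) F₂ p = 0)
    (hdiv : ∀ p : OneJet T, dirDeriv (0, 1, 0, 0, 0, 0) F₁ p + dirDeriv (0, 0, 1, 0, 0, 0) F₂ p
      + p.slopeX • dirDeriv (0, 0, 0, 1, 0, 0) F₁ p
      + p.slopeY • dirDeriv (0, 0, 0, 1, 0, 0) F₂ p = 0) :
    ∃ Φ : ZeroJet T → G, ContDiff ℝ ∞ Φ ∧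
      F₁ = totalDeriv (0, 0, 1, 0) OneJet.slopeY Φ ∧
      F₂ = fun p => -totalDeriv (0, 1, 0, 0) OneJet.slopeX Φ p := by
  obtain ⟨A, B, C, hA, hB, hC, hAB, hAC⟩ := exists_affine_coefficients_of_skew hF₁ hF₂ h₁ h₂ h₁₂
  have hclosed := affine_coefficients_closed (hA.differentiable (by simp))
    (hB.differentiable (by simp)) (hC.differentiable (by simp)) hAB hAC hdiv
  obtain ⟨Φ, hΦ, hΦx, hΦy, hΦζ⟩ := exists_contDiff_dirDeriv_eq_of_curl_eq_zero hC.neg hB hA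
    (fun q => by rw [dirDeriv_neg, (hclosed q).1, neg_neg]) (fun q => (hclosed q).2.1)
    (fun q => by rw [dirDeriv_neg, (hclosed q).2.2, neg_neg])
  refine ⟨Φ, hΦ, funext fun p => ?_, funext fun p => ?_⟩
  · rw [hAB, totalDeriv, hΦy, hΦζ]
  · rw [hAC, totalDeriv, hΦx, hΦζ]
    module

theorem divergence_representation_lemma_general [CompleteSpace G] {f₁ f₂ : OneJet T → G}
    (hf₁ : ContDiff ℝ ∞ f₁) (hf₂ : ContDiff ℝ ∞ f₂)
    (h₁ : ∀ p, dirDeriv (0, 0, 0, 0, 1, 0) (dirDeriv (0, 0, 0, 1, 0, 0) f₁) p = 0)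
    (h₂ : ∀ p, dirDeriv (0, 0, 0, 0, 0, 1) (dirDeriv (0, 0, 0, 1, 0, 0) f₂) p = 0)
    (h₁₂ : ∀ p, dirDeriv (0, 0, 0, 0, 0, 1) (dirDeriv (0, 0, 0, 1, 0, 0) f₁) p
      + dirDeriv (0, 0, 0, 0, 1, 0) (dirDeriv (0, 0, 0, 1, 0, 0) f₂) p = 0)
    (hdiv : ∀ p : OneJet T, dirDeriv (0, 1, 0, 0, 0, 0) (dirDeriv (0, 0, 0, 1, 0, 0) f₁) p
      + dirDeriv (0, 0, 1, 0, 0, 0) (dirDeriv (0, 0, 0, 1, 0, 0) f₂) p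
      + p.slopeX • dirDeriv (0, 0, 0, 1, 0, 0) (dirDeriv (0, 0, 0, 1, 0, 0) f₁) p
      + p.slopeY • dirDeriv (0, 0, 0, 1, 0, 0) (dirDeriv (0, 0, 0, 1, 0, 0) f₂) p = 0) :
    ∃ Ψ : ZeroJet T → G, ContDiff ℝ ∞ Ψ ∧
      ∃ g₁ g₂ : T × ℝ × ℝ × ℝ × ℝ → G, ContDiff ℝ ∞ g₁ ∧ ContDiff ℝ ∞ g₂ ∧
        ∀ t x y ζ ζ₁ ζ₂,
          f₁ (t, x, y, ζ, ζ₁, ζ₂)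
            = totalDeriv (0, 0, 1, 0) OneJet.slopeY Ψ (t, x, y, ζ, ζ₁, ζ₂)
              + g₁ (t, x, y, ζ₁, ζ₂) ∧
          f₂ (t, x, y, ζ, ζ₁, ζ₂)
            = -totalDeriv (0, 1, 0, 0) OneJet.slopeX Ψ (t, x, y, ζ, ζ₁, ζ₂)
              + g₂ (t, x, y, ζ₁, ζ₂) := by
  obtain ⟨Φ, hΦ, hf₁Φ, hf₂Φ⟩ := exists_totalDeriv_potential (contDiff_dirDeriv hf₁ _)
    (contDiff_dirDeriv hf₂ _) h₁ h₂ h₁₂ hdiv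
  let dζ : ZeroJet T →L[ℝ] ℝ := (ContinuousLinearMap.snd ℝ ℝ ℝ).comp
    ((ContinuousLinearMap.snd ℝ ℝ (ℝ × ℝ)).comp (.snd ℝ T (ℝ × ℝ × ℝ)))
  obtain ⟨Ψ, hΨ, hΨζ⟩ := exists_contDiff_dirDeriv_eq (l := dζ) (v := (0, 0, 0, 1)) rfl hΦ
  have hDy := contDiff_totalDeriv (0, 0, 1, 0) OneJet.slopeY hΨ
  have hDx := contDiff_totalDeriv (0, 1, 0, 0) OneJet.slopeX hΨ
  obtain ⟨g₁, hg₁, hfg₁⟩ := exists_contDiff_forall_eq_of_dirDeriv_zeta_eq_zero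
    (hf₁.sub hDy) fun p => by
      rw [dirDeriv_sub (hf₁.differentiable (by simp) p) (hDy.differentiable (by simp) p), hf₁Φ,
        dirDeriv_zeta_totalDeriv _ rfl (contDiff_infty.1 hΨ 2), funext hΨζ, sub_self]
  obtain ⟨g₂, hg₂, hfg₂⟩ := exists_contDiff_forall_eq_of_dirDeriv_zeta_eq_zero
    (hf₂.add hDx) fun p => by
      rw [dirDeriv_add (hf₂.differentiable (by simp) p) (hDx.differentiable (by simp) p), hf₂Φ,
        dirDeriv_zeta_totalDeriv _ rfl (contDiff_infty.1 hΨ 2), funext hΨζ, neg_add_cancel]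
  refine ⟨Ψ, hΨ, g₁, g₂, hg₁, hg₂, fun t x y ζ ζ₁ ζ₂ => ⟨?_, ?_⟩⟩
  · rw [← hfg₁, add_sub_cancel]
  · rw [← hfg₂, neg_add_cancel_comm_assoc]

end Jets

theorem pd6_eq_dirDeriv (v : V6) : pd6 v = dirDeriv v :=
  rfl

theorem pd4_eq_dirDeriv (v : V4) : pd4 v = dirDeriv v :=
  rfl

theorem divergence_representation_lemma
    (f1 f2 : V6 → ℝ) (hf1 : ContDiff ℝ (⊤ : ℕ∞) f1) (hf2 : ContDiff ℝ (⊤ : ℕ∞) f2)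
    -- f¹_{ζζ₁} = 0
    (h1 : ∀ p : V6, pd6 (0, 0, 0, 0, 1, 0) (pd6 (0, 0, 0, 1, 0, 0) f1) p = 0)
    -- f²_{ζζ₂} = 0
    (h2 : ∀ p : V6, pd6 (0, 0, 0, 0, 0, 1) (pd6 (0, 0, 0, 1, 0, 0) f2) p = 0)
    -- f¹_{ζζ₂} + f²_{ζζ₁} = 0
    (h3 : ∀ p : V6, pd6 (0, 0, 0, 0, 0, 1) (pd6 (0, 0, 0, 1, 0, 0) f1) p
                  + pd6 (0, 0, 0, 0, 1, 0) (pd6 (0, 0, 0, 1, 0, 0) f2) p = 0)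
    -- f¹_{ζx} + f²_{ζy} + f¹_{ζζ}·ζ₁ + f²_{ζζ}·ζ₂ = 0
    (h4 : ∀ p : V6, pd6 (0, 1, 0, 0, 0, 0) (pd6 (0, 0, 0, 1, 0, 0) f1) p
                  + pd6 (0, 0, 1, 0, 0, 0) (pd6 (0, 0, 0, 1, 0, 0) f2) p
                  + pd6 (0, 0, 0, 1, 0, 0) (pd6 (0, 0, 0, 1, 0, 0) f1) p * p.2.2.2.2.1
                  + pd6 (0, 0, 0, 1, 0, 0) (pd6 (0, 0, 0, 1, 0, 0) f2) p * p.2.2.2.2.2 = 0) :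
    ∃ Ψ : V4 → ℝ, ContDiff ℝ (⊤ : ℕ∞) Ψ ∧
      ∃ g1 g2 : V5 → ℝ, ContDiff ℝ (⊤ : ℕ∞) g1 ∧ ContDiff ℝ (⊤ : ℕ∞) g2 ∧
        ∀ t x y ζ ζ1 ζ2 : ℝ,
          f1 (t, x, y, ζ, ζ1, ζ2)
            = pd4 (0, 0, 1, 0) Ψ (t, x, y, ζ) + pd4 (0, 0, 0, 1) Ψ (t, x, y, ζ) * ζ2
              + g1 (t, x, y, ζ1, ζ2) ∧
          f2 (t, x, y, ζ, ζ1, ζ2)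
            = -pd4 (0, 1, 0, 0) Ψ (t, x, y, ζ) - pd4 (0, 0, 0, 1) Ψ (t, x, y, ζ) * ζ1
              + g2 (t, x, y, ζ1, ζ2) := by
  simpa only [totalDeriv, OneJet.toZeroJet_apply, OneJet.slopeX_apply, OneJet.slopeY_apply,
    pd4_eq_dirDeriv, smul_eq_mul, mul_comm, neg_add'] using
    divergence_representation_lemma_general hf1 hf2 h1 h2 h3 fun p => by
      simpa only [OneJet.slopeX_apply, OneJet.slopeY_apply, pd6_eq_dirDeriv, smul_eq_mul,
        mul_comm] using h4 p
end
end
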